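/- Let N be a natural number and c₀, …, c_N real numbers. Define u(x) = Σ_{n=0}^{N} cₙ·Tₙ(x) and v(x) = (2/ln 2)·c₀ + Σ_{n=1}^{N} 2n·cₙ·Tₙ(x). Then for every x in the open interval (−1,1), −(1/(2π))·∫_{−1}^{1} ln|x−y| · v(y)/√(1−y²) dy = u(x). (This is the identity S_{0,ω}⁻¹ = 2√(−(ω∂ₓ)²) + (2/ln 2)·π₀ applied to finite Chebyshev expansions, where π₀φ = (1/π)∫_{−1}^{1} φ(y)/√(1−y²) dy is the projection onto T₀ and the square root acts by Tₙ ↦ n·Tₙ.) -/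

import Mathlib

open Real Set MeasureTheory intervalIntegral Finset

/-- The `n`-th Chebyshev polynomial of the first kind, as a real function. -/
noncomputable def chebT (n : ℕ) : ℝ → ℝ := fun x => (Polynomial.Chebyshev.T ℝ n).eval x

/-!
Substituting `y = cos φ` turns `T n` into `cos (n φ)`, and the kernel splits over the unit circle:
`log |cos θ - cos φ| = ℓ (θ - φ) + ℓ (θ + φ) - log 2`, where `ℓ t = log |1 - exp (i t)|`. Hence the
single-layer operator is, up to a constant, convolution with an even `2π`-periodic function, so it
is diagonal in the cosines, with eigenvalues read off from the Fourier series
`ℓ t = -∑ cos (n t) / n`. The coefficients of `ℓ` come from one integration by parts, which replaces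
`ℓ` by `cot (t / 2) / 2`; there `sin (n t) cot (t / 2)` is the trigonometric polynomial
`1 + 2 cos t + ⋯ + 2 cos ((n - 1) t) + cos (n t)`, of integral `π` over `[0, π]`.
-/

section EvenPeriodicConvolution

variable {E : Type*} [NormedAddCommGroup E] [NormedSpace ℝ E]

theorem integral_neg_self_eq_integral_add_comp_neg {f : ℝ → E} {a : ℝ}
    (hneg : IntervalIntegrable f volume (-a) 0) (hpos : IntervalIntegrable f volume 0 a) :
    ∫ t in (-a)..a, f t = ∫ t in (0 : ℝ)..a, (f t + f (-t)) := by
  have hcomp : IntervalIntegrable (fun t => f (-t)) volume 0 a := by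
    simpa using! hneg.symm.comp_sub_left 0
  rw [intervalIntegral.integral_add hpos hcomp, intervalIntegral.integral_comp_neg, neg_zero,
    add_comm, intervalIntegral.integral_add_adjacent_intervals hneg hpos]

theorem integral_comp_sub_left_of_periodic {f : ℝ → E} {T : ℝ} (hf : Function.Periodic f T)
    (a c : ℝ) : ∫ t in a..(a + T), f (c - t) = ∫ t in a..(a + T), f t := by
  rw [intervalIntegral.integral_comp_sub_left, ← hf.intervalIntegral_add_eq (c - (a + T)) a]
  congr 1
  ring

theorem integral_even_periodic_convolution_cos {f : ℝ → ℝ} (heven : Function.Even f)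
    (hper : Function.Periodic f (2 * π)) (hint : ∀ a b, IntervalIntegrable f volume a b)
    (n : ℤ) (θ : ℝ) :
    ∫ φ in (0 : ℝ)..π, (f (θ - φ) + f (θ + φ)) * cos (n * φ)
      = 2 * cos (n * θ) * ∫ t in (0 : ℝ)..π, f t * cos (n * t) := by
  have hshift (a b : ℝ) :
      IntervalIntegrable (fun φ => f (θ - φ) * cos (n * φ)) volume a b := by
    have h := (hint (θ - a) (θ - b)).comp_sub_left θ
    simp only [sub_sub_cancel] at h
    exact h.mul_continuousOn (by fun_prop)
  have hcos (a b : ℝ) :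
      IntervalIntegrable (fun t => f t * cos (n * (θ - t))) volume a b :=
    (hint a b).mul_continuousOn (by fun_prop)
  have hprod : Function.Periodic (fun φ => f (θ - φ) * cos (n * φ)) (2 * π) := fun φ => by
    simp only [← sub_sub, hper.sub_eq, mul_add, cos_add_int_mul_two_pi]
  calc ∫ φ in (0 : ℝ)..π, (f (θ - φ) + f (θ + φ)) * cos (n * φ)
      = ∫ φ in (-π)..π, f (θ - φ) * cos (n * φ) := by
        rw [integral_neg_self_eq_integral_add_comp_neg (hshift _ _) (hshift _ _)]
        simp only [add_mul, sub_neg_eq_add, mul_neg, cos_neg]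
    _ = ∫ t in (-π)..π, f t * cos (n * (θ - t)) := by
        have hreflect := integral_comp_sub_left_of_periodic hprod (-π) θ
        simp only [sub_sub_cancel, show -π + 2 * π = π by ring] at hreflect
        exact hreflect.symm
    _ = ∫ t in (0 : ℝ)..π, 2 * cos (n * θ) * (f t * cos (n * t)) := by
        rw [integral_neg_self_eq_integral_add_comp_neg (hcos _ _) (hcos _ _)]
        congr 1 with t
        rw [heven t, sub_neg_eq_add, mul_sub, mul_add, cos_sub, cos_add]
        ring
    _ = 2 * cos (n * θ) * ∫ t in (0 : ℝ)..π, f t * cos (n * t) :=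
        intervalIntegral.integral_const_mul _ _

end EvenPeriodicConvolution

/-- The logarithm of the chord length `|1 - exp (i t)| = |2 sin (t / 2)|`, the Laplace kernel on the
unit circle; its value at multiples of `2π` is the junk value `log 0 = 0`. -/
noncomputable def logChord (t : ℝ) : ℝ := log |2 * sin (t / 2)|

namespace logChord

theorem even : Function.Even logChord := fun t => by
  simp [logChord, neg_div]

theorem periodic : Function.Periodic logChord (2 * π) := fun t => by
  have hhalf : (t + 2 * π) / 2 = t / 2 + π := by ring
  simp [logChord, hhalf]

theorem intervalIntegrable (a b : ℝ) : IntervalIntegrable logChord volume a b := by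
  have h : AnalyticOnNhd ℝ (fun t : ℝ => 2 * sin (t / 2)) (uIcc a b) := fun t _ => by fun_prop
  exact h.meromorphicOn.intervalIntegrable_log_norm

theorem hasDerivAt {t : ℝ} (ht : sin (t / 2) ≠ 0) :
    HasDerivAt logChord (cos (t / 2) / (2 * sin (t / 2))) t := by
  have hchord : HasDerivAt (fun t : ℝ => 2 * sin (t / 2)) (cos (t / 2)) t := by
    convert! (((hasDerivAt_id t).div_const 2).sin).const_mul 2 using 1
    simp only [id]
    ring
  have hlog : logChord = fun t => log (2 * sin (t / 2)) := funext fun _ => log_abs _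
  exact hlog ▸ hchord.log (mul_ne_zero two_ne_zero ht)

theorem continuous_mul_sin (n : ℤ) : Continuous fun t => logChord t * sin (n * t) := by
  have hfactor (t : ℝ) : logChord t * sin (n * t)
      = (Polynomial.Chebyshev.U ℝ (n - 1)).eval (cos t) * cos (t / 2)
        * (2 * sin (t / 2) * log (2 * sin (t / 2))) := by
    have hU := Polynomial.Chebyshev.U_real_cos t (n - 1)
    have hsin : sin t = 2 * sin (t / 2) * cos (t / 2) := by rw [← sin_two_mul]; ring_nf
    rw [Int.cast_sub, Int.cast_one, sub_add_cancel, hsin] at hU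
    rw [logChord, log_abs, ← hU]
    ring
  simp_rw [hfactor]
  have hxlogx : Continuous fun t : ℝ => 2 * sin (t / 2) * log (2 * sin (t / 2)) :=
    continuous_mul_log.comp (by fun_prop)
  exact Continuous.mul (by fun_prop) hxlogx

end logChord

theorem log_abs_cos_sub_cos {θ φ : ℝ} (h : cos θ ≠ cos φ) :
    log |cos θ - cos φ| = logChord (θ - φ) + logChord (θ + φ) - log 2 := by
  have hprod : 2 * (cos θ - cos φ)
      = -((2 * sin ((θ - φ) / 2)) * (2 * sin ((θ + φ) / 2))) := by
    rw [cos_sub_cos]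
    ring
  have hne : 2 * (cos θ - cos φ) ≠ 0 := mul_ne_zero two_ne_zero (sub_ne_zero.2 h)
  have hne' := hprod ▸ hne
  rw [neg_ne_zero, mul_ne_zero_iff] at hne'
  simp only [logChord, log_abs]
  rw [← log_mul hne'.1 hne'.2, ← log_neg_eq_log (_ * _), ← hprod,
    log_mul two_ne_zero (sub_ne_zero.2 h), add_sub_cancel_left]

theorem ae_cos_ne_cos (θ : ℝ) : ∀ᵐ φ : ℝ, cos θ ≠ cos φ := by
  have hcountable : {φ : ℝ | cos θ = cos φ}.Countable := by
    refine ((countable_range fun k : ℤ => 2 * k * π + θ).union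
      (countable_range fun k : ℤ => 2 * k * π - θ)).mono fun φ hφ => ?_
    obtain ⟨k, rfl | rfl⟩ := cos_eq_cos_iff.1 hφ
    exacts [.inl ⟨k, rfl⟩, .inr ⟨k, rfl⟩]
  exact hcountable.ae_notMem volume

theorem integral_cos_nat_mul_of_ne_zero {n : ℕ} (hn : n ≠ 0) :
    ∫ t in (0 : ℝ)..π, cos (n * t) = 0 := by
  rw [intervalIntegral.integral_comp_mul_left _ (Nat.cast_ne_zero.2 hn), integral_cos,
    sin_nat_mul_pi]
  simp

/-- Zygmund's modified Dirichlet kernel `1 / 2 + cos t + ⋯ + cos ((n - 1) t) + cos (n t) / 2`, with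
neighbouring cosines paired so that multiplication by `sin (t / 2)` makes the sum telescope. -/
noncomputable def modifiedDirichletKernel (n : ℕ) (t : ℝ) : ℝ :=
  ∑ k ∈ range n, (cos (k * t) + cos ((k + 1 : ℕ) * t)) / 2

namespace modifiedDirichletKernel

theorem continuous (n : ℕ) : Continuous (modifiedDirichletKernel n) := by
  unfold modifiedDirichletKernel
  fun_prop

theorem two_mul_sin_half_mul (n : ℕ) (t : ℝ) :
    2 * sin (t / 2) * modifiedDirichletKernel n t = cos (t / 2) * sin (n * t) := by
  have htelescope (k : ℕ) : 2 * sin (t / 2) * ((cos (k * t) + cos ((k + 1 : ℕ) * t)) / 2)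
      = cos (t / 2) * (sin ((k + 1 : ℕ) * t) - sin (k * t)) := by
    rw [cos_add_cos, sin_sub_sin, show (k * t - (k + 1 : ℕ) * t) / 2 = -(t / 2) by push_cast; ring,
      show ((k + 1 : ℕ) * t - k * t) / 2 = t / 2 by push_cast; ring, cos_neg, add_comm (k * t)]
    ring
  rw [modifiedDirichletKernel, Finset.mul_sum, Finset.sum_congr rfl fun k _ => htelescope k,
    ← Finset.mul_sum, Finset.sum_range_sub fun k : ℕ => sin (k * t)]
  simp

theorem integral_eq {n : ℕ} (hn : n ≠ 0) :
    ∫ t in (0 : ℝ)..π, modifiedDirichletKernel n t = π / 2 := by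
  have hcos (k : ℕ) : IntervalIntegrable (fun t => cos (k * t)) volume 0 π :=
    Continuous.intervalIntegrable (by fun_prop) _ _
  obtain ⟨m, rfl⟩ := Nat.exists_eq_succ_of_ne_zero hn
  simp only [modifiedDirichletKernel]
  rw [intervalIntegral.integral_finsetSum fun k _ => ((hcos k).add (hcos (k + 1))).div_const 2]
  simp_rw [intervalIntegral.integral_div, intervalIntegral.integral_add (hcos _) (hcos _),
    integral_cos_nat_mul_of_ne_zero (Nat.succ_ne_zero _), add_zero]
  rw [← Finset.sum_div, Finset.sum_range_succ',
    Finset.sum_eq_zero fun k _ => integral_cos_nat_mul_of_ne_zero (Nat.succ_ne_zero k)]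
  simp

end modifiedDirichletKernel

namespace logChord

theorem integral_eq_zero : ∫ t in (0 : ℝ)..π, logChord t = 0 := by
  have hlog : ∫ s in (0 : ℝ)..(π / 2), logChord (2 * s)
      = ∫ s in (0 : ℝ)..(π / 2), (log 2 + log (sin s)) := by
    refine intervalIntegral.integral_congr_ae (.of_forall fun s hs => ?_)
    rw [uIoc_of_le (by positivity)] at hs
    have hsin : sin s ≠ 0 := (sin_pos_of_pos_of_lt_pi hs.1 (by linarith [hs.2, pi_pos])).ne'
    rw [logChord, log_abs, mul_div_cancel_left₀ s two_ne_zero, log_mul two_ne_zero hsin]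
  have hscale := intervalIntegral.mul_integral_comp_mul_left (a := 0) (b := π / 2) (f := logChord) 2
  rw [mul_zero, mul_div_cancel₀ π two_ne_zero, hlog,
    intervalIntegral.integral_add (g := fun s => log (sin s)) (by simp) intervalIntegrable_log_sin,
    integral_log_sin_zero_pi_div_two, intervalIntegral.integral_const, smul_eq_mul] at hscale
  rw [← hscale]
  ring

theorem hasDerivAt_mul_sin (n : ℕ) {t : ℝ} (ht : sin (t / 2) ≠ 0) :
    HasDerivAt (fun t => logChord t * sin (n * t))
      (modifiedDirichletKernel n t + n * (logChord t * cos (n * t))) t := by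
  have hcot : cos (t / 2) / (2 * sin (t / 2)) * sin (n * t) = modifiedDirichletKernel n t := by
    rw [div_mul_eq_mul_div, ← modifiedDirichletKernel.two_mul_sin_half_mul]
    exact mul_div_cancel_left₀ _ (mul_ne_zero two_ne_zero ht)
  convert! (hasDerivAt ht).mul (((hasDerivAt_id t).const_mul (n : ℝ)).sin) using 1
  rw [← hcot]
  simp only [id]
  ring

theorem integral_mul_cos {n : ℕ} (hn : n ≠ 0) :
    ∫ t in (0 : ℝ)..π, logChord t * cos (n * t) = -(π / (2 * n)) := by
  have hsin : ∀ t ∈ Ioo 0 π, sin (t / 2) ≠ 0 := fun t ht =>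
    (sin_pos_of_pos_of_lt_pi (half_pos ht.1) (by linarith [ht.1, ht.2])).ne'
  have hkernel : IntervalIntegrable (modifiedDirichletKernel n) volume 0 π :=
    (modifiedDirichletKernel.continuous n).intervalIntegrable _ _
  have hcos : IntervalIntegrable (fun t => logChord t * cos (n * t)) volume 0 π :=
    (logChord.intervalIntegrable 0 π).mul_continuousOn (by fun_prop)
  have hparts := integral_eq_sub_of_hasDerivAt_of_le pi_pos.le
    (by exact_mod_cast (continuous_mul_sin n).continuousOn)
    (fun t ht => hasDerivAt_mul_sin n (hsin t ht)) (hkernel.add (hcos.const_mul _))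
  rw [intervalIntegral.integral_add hkernel (hcos.const_mul _),
    intervalIntegral.integral_const_mul, modifiedDirichletKernel.integral_eq hn, sin_nat_mul_pi,
    mul_zero, mul_zero, sin_zero, mul_zero, sub_zero] at hparts
  have hn' : (n : ℝ) ≠ 0 := Nat.cast_ne_zero.2 hn
  field_simp
  linarith

end logChord

/-- The eigenvalue of the weighted single-layer operator on `T n`. The mode `n = 0` is set apart:
`logChord` has mean zero, so only the constant `-log 2` in `log_abs_cos_sub_cos` acts on it. -/
noncomputable def singleLayerEigenvalue (n : ℕ) : ℝ := if n = 0 then log 2 / 2 else 1 / (2 * n)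

theorem singleLayerEigenvalue_ne_zero (n : ℕ) : singleLayerEigenvalue n ≠ 0 := by
  have hlog2 : log 2 ≠ 0 := (log_pos one_lt_two).ne'
  rw [singleLayerEigenvalue]
  split_ifs with hn
  · exact div_ne_zero hlog2 two_ne_zero
  · positivity

theorem integral_log_abs_cos_sub_cos_mul_cos (n : ℕ) (θ : ℝ) :
    ∫ φ in (0 : ℝ)..π, log |cos θ - cos φ| * cos (n * φ)
      = -(2 * π) * (singleLayerEigenvalue n * cos (n * θ)) := by
  have hsplit : ∫ φ in (0 : ℝ)..π, log |cos θ - cos φ| * cos (n * φ)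
      = ∫ φ in (0 : ℝ)..π, ((logChord (θ - φ) + logChord (θ + φ)) * cos (n * φ)
          - log 2 * cos (n * φ)) := by
    refine intervalIntegral.integral_congr_ae ?_
    filter_upwards [ae_cos_ne_cos θ] with φ hφ _
    rw [log_abs_cos_sub_cos hφ]
    ring
  have hsub : IntervalIntegrable (fun φ => logChord (θ - φ)) volume 0 π := by
    simpa using (logChord.intervalIntegrable θ (θ - π)).comp_sub_left θ
  have hadd : IntervalIntegrable (fun φ => logChord (θ + φ)) volume 0 π := by
    simpa using (logChord.intervalIntegrable θ (θ + π)).comp_add_left θ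
  have hconv := integral_even_periodic_convolution_cos logChord.even logChord.periodic
    logChord.intervalIntegrable n θ
  simp only [Int.cast_natCast] at hconv
  rw [hsplit, intervalIntegral.integral_sub ((hsub.add hadd).mul_continuousOn (by fun_prop))
    (Continuous.intervalIntegrable (by fun_prop) _ _), hconv, intervalIntegral.integral_const_mul]
  rcases eq_or_ne n 0 with rfl | hn
  · simp only [singleLayerEigenvalue, if_true, Nat.cast_zero, zero_mul, cos_zero, mul_one,
      logChord.integral_eq_zero, intervalIntegral.integral_const, sub_zero, smul_eq_mul]
    ring
  · rw [logChord.integral_mul_cos hn, integral_cos_nat_mul_of_ne_zero hn, singleLayerEigenvalue,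
      if_neg hn]
    ring

theorem chebT_cos (n : ℕ) (θ : ℝ) : chebT n (cos θ) = cos (n * θ) := by
  simp [chebT, Polynomial.Chebyshev.T_real_cos]

theorem continuous_chebT (n : ℕ) : Continuous (chebT n) :=
  (Polynomial.Chebyshev.T ℝ n).continuous

/-- The weighted Laplace single-layer operator `S_{0,ω}` on the segment `[-1, 1]`, with weight
`1 / ω y = 1 / √(1 - y ^ 2)`. -/
noncomputable def weightedSingleLayer (α : ℝ → ℝ) (x : ℝ) : ℝ :=
  -(1 / (2 * π)) * ∫ y in (-1 : ℝ)..1, log |x - y| * α y / √(1 - y ^ 2)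

namespace weightedSingleLayer

theorem eq_integral_cos (α : ℝ → ℝ) (x : ℝ) :
    weightedSingleLayer α x
      = -(1 / (2 * π)) * ∫ φ in (0 : ℝ)..π, log |x - cos φ| * α (cos φ) := by
  rw [weightedSingleLayer,
    ← Polynomial.Chebyshev.integral_measureT_eq_integral_cos (f := fun y => log |x - y| * α y),
    Polynomial.Chebyshev.integral_measureT]
  simp_rw [div_eq_mul_inv _ √_, sqrt_inv]

theorem apply_sum_mul {ι : Type*} (s : Finset ι) (a : ι → ℝ) (f : ι → ℝ → ℝ)
    (hf : ∀ i ∈ s, ContinuousOn (f i) (Icc (-1) 1)) (x : ℝ) :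
    weightedSingleLayer (fun y => ∑ i ∈ s, a i * f i y) x
      = ∑ i ∈ s, a i * weightedSingleLayer (f i) x := by
  have hlog : IntervalIntegrable (fun φ => log |x - cos φ|) volume 0 π := by
    have h : AnalyticOnNhd ℝ (fun φ : ℝ => x - cos φ) (uIcc 0 π) := fun φ _ => by fun_prop
    simpa [Function.comp_def] using h.meromorphicOn.intervalIntegrable_log
  have hterm : ∀ i ∈ s, IntervalIntegrable
      (fun φ => a i * (log |x - cos φ| * f i (cos φ))) volume 0 π := fun i hi =>
    (hlog.mul_continuousOn ((hf i hi).comp continuous_cos.continuousOn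
      fun φ _ => cos_mem_Icc φ)).const_mul _
  simp_rw [eq_integral_cos, Finset.mul_sum, mul_left_comm (log _)]
  rw [intervalIntegral.integral_finsetSum hterm, Finset.mul_sum]
  simp_rw [intervalIntegral.integral_const_mul, mul_left_comm (a _)]

theorem apply_chebT (n : ℕ) {x : ℝ} (hx : x ∈ Icc (-1 : ℝ) 1) :
    weightedSingleLayer (chebT n) x = singleLayerEigenvalue n * chebT n x := by
  obtain ⟨θ, rfl⟩ : ∃ θ, cos θ = x := ⟨arccos x, cos_arccos hx.1 hx.2⟩
  simp_rw [eq_integral_cos, chebT_cos, integral_log_abs_cos_sub_cos_mul_cos]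
  field_simp

theorem apply_sum_inv_eigenvalue_mul_chebT (s : Finset ℕ) (c : ℕ → ℝ) {x : ℝ}
    (hx : x ∈ Icc (-1 : ℝ) 1) :
    weightedSingleLayer (fun y => ∑ n ∈ s, (singleLayerEigenvalue n)⁻¹ * c n * chebT n y) x
      = ∑ n ∈ s, c n * chebT n x := by
  rw [apply_sum_mul s _ _ fun n _ => (continuous_chebT n).continuousOn]
  refine Finset.sum_congr rfl fun n _ => ?_
  have hσ := singleLayerEigenvalue_ne_zero n
  rw [apply_chebT n hx]
  field_simp

end weightedSingleLayer

theorem sum_range_inv_singleLayerEigenvalue_mul_chebT (N : ℕ) (c : ℕ → ℝ) (y : ℝ) :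
    ∑ n ∈ range (N + 1), (singleLayerEigenvalue n)⁻¹ * c n * chebT n y
      = 2 / log 2 * c 0 + ∑ n ∈ Finset.Icc 1 N, 2 * (n : ℝ) * c n * chebT n y := by
  rw [Finset.range_eq_Ico, Finset.sum_eq_sum_Ico_succ_bot N.succ_pos]
  refine congrArg₂ (· + ·) ?_ (Finset.sum_congr (by ext; simp) fun n hn => ?_)
  · simp [singleLayerEigenvalue, chebT]
  · have hn0 : n ≠ 0 := Nat.one_le_iff_ne_zero.1 (Finset.mem_Icc.1 hn).1
    simp [singleLayerEigenvalue, hn0]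

theorem weighted_single_layer_inverse_finite_general (N : ℕ) (c : ℕ → ℝ) {x : ℝ}
    (hx : x ∈ Icc (-1 : ℝ) 1) :
    weightedSingleLayer (fun y => 2 / log 2 * c 0
        + ∑ n ∈ Finset.Icc 1 N, 2 * (n : ℝ) * c n * chebT n y) x
      = ∑ n ∈ range (N + 1), c n * chebT n x := by
  simp_rw [← sum_range_inv_singleLayerEigenvalue_mul_chebT]
  exact weightedSingleLayer.apply_sum_inv_eigenvalue_mul_chebT _ c hx

/-- The inverse of the weighted Laplace single-layer operator is
`2√(-(ω∂ₓ)²) + (2/ln 2) π₀`, expressed on finite Chebyshev expansions: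
if `u = Σ cₙ Tₙ` and `v = (2/ln 2) c₀ + Σ_{n≥1} 2n cₙ Tₙ`, then `S_{0,ω} v = u`. -/
theorem weighted_single_layer_inverse_finite (N : ℕ) (c : ℕ → ℝ) (x : ℝ)
    (hx : x ∈ Ioo (-1 : ℝ) 1) :
    -(1 / (2 * π)) * ∫ y in (-1 : ℝ)..1,
        Real.log |x - y| *
          ((2 / Real.log 2) * c 0
            + ∑ n ∈ Finset.Icc 1 N, 2 * (n : ℝ) * c n * chebT n y)
          / Real.sqrt (1 - y ^ 2)
      = ∑ n ∈ Finset.range (N + 1), c n * chebT n x :=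
  weighted_single_layer_inverse_finite_general N c (Ioo_subset_Icc_self hx)
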